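/- Let α : [N] → ℂ with Σ_{y∈[N]} |α_y|² = 1 and Σ_{y∈[N]} α_y = 0, where N = 2^{2n}. Let D be a probability distribution on pairs (π,ω) of permutations of {0,1}^{2n}, and let C ≥ 0 and t ≥ 0 be such that: for all y ∈ [N] with α_y ≠ 0 and all l ∈ {0,1}^n, Pr_{(π,ω)~D}[ω^{-1}(y)_L = l] = 2^{-n}; and for all distinct y, y' with α_y ≠ 0 ≠ α_{y'} and all l ∈ {0,1}^n, |Pr_{(π,ω)~D}[ω^{-1}(y)_L = ω^{-1}(y')_L = l] − 2^{-2n}| ≤ C·t²·2^{-3n}. Then E_{(π,ω)~D}[ Σ_{l∈{0,1}^n} | Σ_{r∈{0,1}^n} α_{ω(l∥r)} |² ] ≤ 1 + C·t². -/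

import Mathlib

/-!
Write `P_l(y, y')` for the probability that `ω⁻¹(y)` and `ω⁻¹(y')` both have left half `l`. Expanding
the square, the expectation is `∑_l ∑_{y,y'} Re(α_y conj α_{y'}) P_l(y, y')`. Each summand is at most

  `Re(α_y conj α_{y'}) 2^{-2n} + |α_y| |α_{y'}| C t² 2^{-3n} + [y = y'] |α_y|² 2^{-n}`:

this is trivial when `α_y` or `α_{y'}` is zero; otherwise it holds off the diagonal by near pairwise
independence, and on the diagonal because `P_l(y, y) = 2^{-n}` makes the
last term alone an equality and the others are nonnegative. Summed over `y, y'`, the first term vanishes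
as `α` has mean zero, the second is at most `C t² 2^{-n}` by Cauchy–Schwarz, and the third is `2^{-n}`.
Summing over the `2^n` values of `l` gives `1 + C t²`.
-/

/-! Common setup: bit strings, databases, chains, canonical triples,
allowable partial injective functions, twirling. -/

instance (w : ℕ) : Fintype (BitVec w) :=
  Fintype.ofEquiv (Fin (2 ^ w)) ⟨BitVec.ofFin, BitVec.toFin, fun _ => rfl, fun _ => rfl⟩

namespace CPO

/-- `W n` is the set of `n`-bit strings. -/
abbrev W (n : ℕ) := BitVec n

/-- `TW n` models `{0,1}^{2n}` as a pair (left half, right half). -/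
abbrev TW (n : ℕ) := BitVec n × BitVec n

/-- A database: a partial function from `{0,1}^n` to `{0,1}^n`. -/
abbrev DB (n : ℕ) := BitVec n → Option (BitVec n)

/-- A triple of databases `(D_h, D_k, D_f)`. -/
abbrev T3 (n : ℕ) := DB n × DB n × DB n

/-- A partial function on `{0,1}^{2n}`. -/
abbrev PF (n : ℕ) := TW n → Option (TW n)

/-- Domain of a database. -/
def dbDom {n : ℕ} (D : DB n) : Set (W n) := {w | D w ≠ none}

/-- Size of a database. -/
noncomputable def dbSize {n : ℕ} (D : DB n) : ℕ := (dbDom D).ncard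

/-- Partial injectivity. -/
def PInj {n : ℕ} (I : PF n) : Prop :=
  ∀ x x' y, I x = some y → I x' = some y → x = x'

def piDom {n : ℕ} (I : PF n) : Set (TW n) := {x | I x ≠ none}

def piIm {n : ℕ} (I : PF n) : Set (TW n) := {y | ∃ x, I x = some y}

noncomputable def piSize {n : ℕ} (I : PF n) : ℕ := (piDom I).ncard

/-- There is a chain `(u, m, v)` in the triple `T = (D_h, D_k, D_f)`:
`D_h(u_L) ⊕ u_R = m = D_f(v_L) ⊕ v_R` and `u_L ⊕ v_L = D_k(m)`. -/
def IsChain {n : ℕ} (T : T3 n) (u : TW n) (m : W n) (v : TW n) : Prop :=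
  T.1 u.1 = some (m ^^^ u.2) ∧ T.2.2 v.1 = some (m ^^^ v.2) ∧ T.2.1 m = some (u.1 ^^^ v.1)

/-- The set of chains of a triple, as triples `(u, (m, v))`. -/
def chainsSet {n : ℕ} (T : T3 n) : Set (TW n × W n × TW n) :=
  {c | IsChain T c.1 c.2.1 c.2.2}

/-- Two chains collide if they share `m`, `u_L` or `v_L`. -/
def Collide {n : ℕ} (c c' : TW n × W n × TW n) : Prop :=
  c.2.1 = c'.2.1 ∨ c.1.1 = c'.1.1 ∨ c.2.2.1 = c'.2.2.1

/-- A triple is canonical if no two distinct chains collide and every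
input-output pair of each database participates in exactly one chain. -/
def Canonical {n : ℕ} (T : T3 n) : Prop :=
  (∀ c ∈ chainsSet T, ∀ c' ∈ chainsSet T, c ≠ c' → ¬ Collide c c') ∧
  (∀ w, T.1 w ≠ none → ∃! c, c ∈ chainsSet T ∧ c.1.1 = w) ∧
  (∀ m, T.2.1 m ≠ none → ∃! c, c ∈ chainsSet T ∧ c.2.1 = m) ∧
  (∀ w, T.2.2 w ≠ none → ∃! c, c ∈ chainsSet T ∧ c.2.2.1 = w)

/-- `Supports T I` : the partial function supported by `T` is exactly `I`
(i.e. `Supp(T) = I`). -/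
def Supports {n : ℕ} (T : T3 n) (I : PF n) : Prop :=
  ∀ u v, I u = some v ↔ ∃ m, IsChain T u m v

open Classical in
/-- The partial function supported by a triple (choice-based representative). -/
noncomputable def suppFun {n : ℕ} (T : T3 n) : PF n :=
  fun u => if h : ∃ v, ∃ m, IsChain T u m v then some h.choose else none

/-- An allowable partial injective function: no input, output, or internal
left collisions. -/
def AllowableI {n : ℕ} (I : PF n) : Prop :=
  PInj I ∧
  (∀ x x', x ∈ piDom I → x' ∈ piDom I → x ≠ x' → x.1 ≠ x'.1) ∧
  (∀ y y', y ∈ piIm I → y' ∈ piIm I → y ≠ y' → y.1 ≠ y'.1) ∧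
  (∀ x y x' y', I x = some y → x' ∈ piDom I → y' ∈ piIm I →
    (x, y) ≠ (x', y') → x.1 ^^^ y.1 ≠ x'.1 ^^^ y'.1)

/-- `A` allows `u` if some extension `A[u→v]` is allowable. -/
def Allows {n : ℕ} (A : PF n) (u : TW n) : Prop :=
  ∃ v, AllowableI (Function.update A u (some v))

/-- `V_{u,A}`: the set of `v` such that `A[u→v]` is allowable. -/
def Vset {n : ℕ} (A : PF n) (u : TW n) : Set (TW n) :=
  {v | AllowableI (Function.update A u (some v))}

/-- `L_{u,A}`: the set of left substrings of elements of `V_{u,A}`. -/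
def Lset {n : ℕ} (A : PF n) (u : TW n) : Set (W n) :=
  {c | ∃ v ∈ Vset A u, v.1 = c}

/-- `D(I)`: the set of canonical triples supporting `I`. -/
def DofA {n : ℕ} (I : PF n) : Set (T3 n) := {T | Canonical T ∧ Supports T I}

end CPO
namespace CPO

lemma card_W (n : ℕ) : Fintype.card (W n) = 2 ^ n := by
  rw [Fintype.card_congr (⟨BitVec.toFin, BitVec.ofFin, fun _ => rfl, fun _ => rfl⟩ :
    BitVec n ≃ Fin (2 ^ n)), Fintype.card_fin]

lemma norm_sum_sq {ι : Type*} (s : Finset ι) (f : ι → ℂ) :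
    ‖∑ y ∈ s, f y‖ ^ 2 = ∑ y ∈ s, ∑ y' ∈ s, (f y * star (f y')).re := by
  have h : ((‖∑ y ∈ s, f y‖ ^ 2 : ℝ) : ℂ) = (∑ y ∈ s, f y) * star (∑ y ∈ s, f y) := by
    rw [Complex.star_def, Complex.mul_conj, Complex.normSq_eq_norm_sq]
  rw [← Complex.ofReal_re (‖∑ y ∈ s, f y‖ ^ 2), h, star_sum, Finset.sum_mul_sum]
  simp only [Complex.re_sum]

/-- The collision mass on the block `l`, reindexed by the outputs `y = ω (l, r)`. -/
lemma block_sq {n : ℕ} (α : TW n → ℂ) (ω : Equiv.Perm (TW n)) (l : W n) :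
    ‖∑ r : W n, α (ω (l, r))‖ ^ 2 =
      ∑ y, ∑ y', (α y * star (α y')).re *
        (if (ω.symm y).1 = l ∧ (ω.symm y').1 = l then 1 else 0) := by
  have h : ∑ r : W n, α (ω (l, r)) = ∑ y, if (ω.symm y).1 = l then α y else 0 := by
    symm
    rw [← Equiv.sum_comp ω, Fintype.sum_prod_type, Finset.sum_eq_single l]
    · simp
    · intro b _ hb
      simp [hb]
    · simp
  rw [h, norm_sum_sq]
  refine Finset.sum_congr rfl fun y _ => Finset.sum_congr rfl fun y' _ => ?_
  by_cases ha : (ω.symm y).1 = l <;> by_cases hb : (ω.symm y').1 = l <;> simp [ha, hb]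

/-- The twirling lemma: if the left half of `ω⁻¹(y)` is
exactly uniform and pairwise nearly independent under the distribution `D`,
then for any mean-zero unit vector `α` the expected collision mass
`E[Σ_l |Σ_r α_{ω(l∥r)}|²]` is at most `1 + C·t²`. -/
theorem twirl_JL {n : ℕ} (hn : 1 ≤ n) (α : TW n → ℂ)
    (hnorm : ∑ y : TW n, ‖α y‖ ^ 2 = 1) (hsum : ∑ y : TW n, α y = 0)
    (p : Equiv.Perm (TW n) × Equiv.Perm (TW n) → ℝ)
    (hp0 : ∀ q, 0 ≤ p q) (hp1 : ∑ q, p q = 1)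
    (C t : ℝ) (hC : 0 ≤ C) (ht : 0 ≤ t)
    (h1 : ∀ y : TW n, α y ≠ 0 → ∀ l : W n,
      ∑ q ∈ Finset.univ.filter (fun q : Equiv.Perm (TW n) × Equiv.Perm (TW n) =>
        (q.2.symm y).1 = l), p q = ((2 : ℝ) ^ n)⁻¹)
    (h2 : ∀ y y' : TW n, y ≠ y' → α y ≠ 0 → α y' ≠ 0 → ∀ l : W n,
      |∑ q ∈ Finset.univ.filter (fun q : Equiv.Perm (TW n) × Equiv.Perm (TW n) =>
          (q.2.symm y).1 = l ∧ (q.2.symm y').1 = l), p q -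
        ((2 : ℝ) ^ (2 * n))⁻¹| ≤ C * t ^ 2 / 2 ^ (3 * n)) :
    ∑ q : Equiv.Perm (TW n) × Equiv.Perm (TW n),
      p q * ∑ l : W n, ‖∑ r : W n, α (q.2 (l, r))‖ ^ 2 ≤ 1 + C * t ^ 2 := by
  classical
  set P : W n → TW n → TW n → ℝ := fun l y y' =>
    ∑ q ∈ Finset.univ.filter (fun q : Equiv.Perm (TW n) × Equiv.Perm (TW n) =>
      (q.2.symm y).1 = l ∧ (q.2.symm y').1 = l), p q with hP
  set G : TW n → TW n → ℝ := fun y y' => (α y * star (α y')).re with hG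
  have expand : ∑ q : Equiv.Perm (TW n) × Equiv.Perm (TW n),
      p q * ∑ l : W n, ‖∑ r : W n, α (q.2 (l, r))‖ ^ 2 =
      ∑ l : W n, ∑ y, ∑ y', G y y' * P l y y' := by
    simp only [Finset.mul_sum, block_sq, hP, Finset.sum_filter]
    rw [Finset.sum_comm]
    refine Finset.sum_congr rfl fun l _ => ?_
    rw [Finset.sum_comm]
    refine Finset.sum_congr rfl fun y _ => ?_
    rw [Finset.sum_comm]
    refine Finset.sum_congr rfl fun y' _ => Finset.sum_congr rfl fun q _ => ?_
    split_ifs <;> simp [hG, mul_comm]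
  have Gdiag : ∀ y, G y y = ‖α y‖ ^ 2 := by
    intro y
    simpa only [Finset.sum_singleton] using (norm_sum_sq {y} α).symm
  have Gabs : ∀ y y', |G y y'| ≤ ‖α y‖ * ‖α y'‖ := by
    intro y y'
    refine (Complex.abs_re_le_norm _).trans ?_
    rw [norm_mul, norm_star]
  have Gsum : ∑ y, ∑ y', G y y' = 0 := by
    rw [hG, ← norm_sum_sq, hsum]
    simp
  set ε : ℝ := C * t ^ 2 / 2 ^ (3 * n) with hε
  have hε0 : 0 ≤ ε := by positivity
  have term : ∀ l y y', G y y' * P l y y' ≤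
      G y y' * ((2 : ℝ) ^ (2 * n))⁻¹ + ‖α y‖ * ‖α y'‖ * ε +
        (if y = y' then ‖α y‖ ^ 2 * ((2 : ℝ) ^ n)⁻¹ else 0) := by
    intro l y y'
    by_cases hy : α y = 0
    · simp [hG, hy]
    by_cases hy' : α y' = 0
    · by_cases h : y = y'
      · exact absurd (h ▸ hy') hy
      · simp [hG, hy', h]
    by_cases h : y = y'
    · subst h
      have hPd : P l y y = ((2 : ℝ) ^ n)⁻¹ := by
        simpa [hP] using h1 y hy l
      rw [hPd, Gdiag, if_pos rfl]
      have : 0 ≤ ‖α y‖ ^ 2 * ((2 : ℝ) ^ (2 * n))⁻¹ := by positivity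
      have : 0 ≤ ‖α y‖ * ‖α y‖ * ε := by positivity
      linarith
    · have hb := h2 y y' h hy hy' l
      rw [if_neg h, add_zero]
      have : G y y' * (P l y y' - ((2 : ℝ) ^ (2 * n))⁻¹) ≤ ‖α y‖ * ‖α y'‖ * ε := by
        refine (le_abs_self _).trans ?_
        rw [abs_mul]
        exact mul_le_mul (Gabs y y') hb (abs_nonneg _) (by positivity)
      linarith
  have cs : (∑ y, ‖α y‖) ^ 2 ≤ (2 : ℝ) ^ (2 * n) := by
    have h := sq_sum_le_card_mul_sum_sq (s := (Finset.univ : Finset (TW n))) (f := fun y => ‖α y‖)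
    rw [hnorm, Finset.card_univ, Fintype.card_prod, card_W] at h
    refine h.trans (le_of_eq ?_)
    push_cast
    ring
  have block : ∀ l : W n, ∑ y, ∑ y', G y y' * P l y y' ≤ (1 + C * t ^ 2) * ((2 : ℝ) ^ n)⁻¹ := by
    intro l
    refine (Finset.sum_le_sum fun y _ => Finset.sum_le_sum fun y' _ => term l y y').trans ?_
    simp only [Finset.sum_add_distrib, ← Finset.sum_mul, Gsum, Finset.sum_ite_eq,
      Finset.mem_univ, if_true, hnorm, ← Finset.sum_mul_sum]
    have h : (∑ y, ‖α y‖) ^ 2 * ε ≤ C * t ^ 2 * ((2 : ℝ) ^ n)⁻¹ := by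
      refine (mul_le_mul_of_nonneg_right cs hε0).trans (le_of_eq ?_)
      rw [hε]
      have : (2 : ℝ) ^ (3 * n) = 2 ^ (2 * n) * 2 ^ n := by ring
      rw [this]
      field_simp
    linarith
  rw [expand]
  refine (Finset.sum_le_sum fun l _ => block l).trans (le_of_eq ?_)
  rw [Finset.sum_const, Finset.card_univ, card_W, nsmul_eq_mul]
  push_cast
  field_simp

end CPO
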